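/- In the event-independent setting (U_i = U for all i), for every finitely supported (ε,ℓ_t)-calibrated predictor f with true-expected-outcome map κ, define g̃_i(q) = Σ_{p∈supp(f_i): κ(p)=q} f_i(p) for each event i and χ(q,p) = Σ_i λ_i·f_i(p)·1{κ(p)=q}. Then g̃ is a perfectly calibrated predictor, χ is a post-processing plan that is feasible for (g̃, ε, t), and the predictor f† generated by (g̃, χ) satisfies V(f†) = V(f). -/

import Mathlib

open Finset

noncomputable section

namespace PersuasiveCalibration

/-- The environment of the persuasive calibration problem: `n` events with
probabilities `lam i > 0` summing to one and sorted expected outcomes `theta i ∈ [0,1]`. -/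
structure Setup (n : ℕ) : Type where
  lam : Fin n → ℝ
  theta : Fin n → ℝ
  lam_pos : ∀ i, 0 < lam i
  lam_sum : ∑ i, lam i = 1
  theta_mono : Monotone theta
  theta_mem : ∀ i, theta i ∈ Set.Icc (0 : ℝ) 1

variable {n : ℕ}

/-- A finitely supported probability distribution on `[0,1]`. -/
def IsDist (μ : ℝ →₀ ℝ) : Prop :=
  (∀ p, 0 ≤ μ p) ∧ (∀ p ∈ μ.support, p ∈ Set.Icc (0 : ℝ) 1) ∧ (∑ p ∈ μ.support, μ p) = 1

/-- A predictor assigns to each event a finitely supported probability distribution on `[0,1]`. -/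
def IsPredictor (f : Fin n → ℝ →₀ ℝ) : Prop := ∀ i, IsDist (f i)

/-- The (unconditional) prediction space of a predictor. -/
def suppF (f : Fin n → ℝ →₀ ℝ) : Finset ℝ := Finset.univ.biUnion fun i => (f i).support

/-- The marginalized predictor `f(p) = ∑ i, λ i * f i p`. -/
def marginal (S : Setup n) (f : Fin n → ℝ →₀ ℝ) (p : ℝ) : ℝ := ∑ i, S.lam i * f i p

/-- The true expected outcome conditional on the prediction `p`. -/
def kappa (S : Setup n) (f : Fin n → ℝ →₀ ℝ) (p : ℝ) : ℝ :=
  (∑ i, S.lam i * f i p * S.theta i) / marginal S f p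

/-- The `ℓ_t`-norm expected calibration error of a predictor. -/
def ECE (S : Setup n) (t : ℝ) (f : Fin n → ℝ →₀ ℝ) : ℝ :=
  (∑ p ∈ suppF f, marginal S f p * |kappa S f p - p| ^ t) ^ (1 / t)

/-- The principal's expected payoff from predictor `f` with indirect utilities `U i`. -/
def payoff (S : Setup n) (U : Fin n → ℝ → ℝ) (f : Fin n → ℝ →₀ ℝ) : ℝ :=
  ∑ i, S.lam i * ∑ p ∈ (f i).support, f i p * U i p

/-- The principal's payoff in the event-independent setting. -/
def payoffEI (S : Setup n) (U : ℝ → ℝ) (f : Fin n → ℝ →₀ ℝ) : ℝ :=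
  payoff S (fun _ => U) f

/-- A predictor is perfectly calibrated if `κ(q) = q` on its support. -/
def PerfectlyCalibrated (S : Setup n) (g : Fin n → ℝ →₀ ℝ) : Prop :=
  ∀ q ∈ suppF g, kappa S g q = q

/-- An event-independent post-processing plan: a finitely supported probability
distribution on `[0,1] × [0,1]`; the first coordinate is `q`, the second is `p`. -/
def IsPlan (χ : ℝ × ℝ →₀ ℝ) : Prop :=
  (∀ x, 0 ≤ χ x) ∧ (∀ x ∈ χ.support, x.1 ∈ Set.Icc (0 : ℝ) 1 ∧ x.2 ∈ Set.Icc (0 : ℝ) 1) ∧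
    (∑ x ∈ χ.support, χ x) = 1

/-- The `ℓ_t` calibration cost `∑ χ(q,p) |q - p|^t` of a plan. -/
def planCost (t : ℝ) (χ : ℝ × ℝ →₀ ℝ) : ℝ := ∑ x ∈ χ.support, χ x * |x.1 - x.2| ^ t

/-- The `q`-marginal `∑_p χ(q, p)` of a plan. -/
def planMargQ (χ : ℝ × ℝ →₀ ℝ) (q : ℝ) : ℝ :=
  ∑ x ∈ χ.support.filter fun x => x.1 = q, χ x

/-- Feasibility of a post-processing plan for a perfectly calibrated predictor `g` and
an `ℓ_t` ECE budget `ε`. -/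
def FeasiblePlan (S : Setup n) (t ε : ℝ) (g : Fin n → ℝ →₀ ℝ) (χ : ℝ × ℝ →₀ ℝ) : Prop :=
  planCost t χ ≤ ε ^ t ∧ ∀ q, planMargQ χ q = marginal S g q

/-- The value `f_i(p) = ∑_q (g̃_i(q)/g(q)) χ(q,p)` of the predictor generated by `(g̃, χ)`. -/
def genVal (S : Setup n) (g : Fin n → ℝ →₀ ℝ) (χ : ℝ × ℝ →₀ ℝ) (i : Fin n) (p : ℝ) : ℝ :=
  ∑ q ∈ suppF g, g i q / marginal S g q * χ (q, p)

/-- A predictor generated by some perfectly calibrated predictor and some feasible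
event-independent post-processing plan. -/
def IsGenerated (S : Setup n) (t ε : ℝ) (f : Fin n → ℝ →₀ ℝ) : Prop :=
  ∃ (g : Fin n → ℝ →₀ ℝ) (χ : ℝ × ℝ →₀ ℝ),
    IsPredictor g ∧ PerfectlyCalibrated S g ∧ IsPlan χ ∧ FeasiblePlan S t ε g χ ∧
      ∀ i p, f i p = genVal S g χ i p

/-- The CDF of a finitely supported distribution. -/
def cdf (μ : ℝ →₀ ℝ) (x : ℝ) : ℝ := ∑ q ∈ μ.support.filter fun q => q ≤ x, μ q

/-- The CDF of the distribution placing mass `λ_i` at `θ_i`. -/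
def priorCdf (S : Setup n) (x : ℝ) : ℝ :=
  ∑ i ∈ Finset.univ.filter fun i => S.theta i ≤ x, S.lam i

/-- `μ` is a mean-preserving contraction of the distribution putting mass `λ_i` on `θ_i`. -/
def MPCprior (S : Setup n) (μ : ℝ →₀ ℝ) : Prop :=
  (∀ s ∈ Set.Icc (0 : ℝ) 1,
      (∫ x in (0 : ℝ)..s, cdf μ x) ≤ ∫ x in (0 : ℝ)..s, priorCdf S x) ∧
    (∫ x in (0 : ℝ)..(1 : ℝ), cdf μ x) = ∫ x in (0 : ℝ)..(1 : ℝ), priorCdf S x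

/-- The objective `∑ χ(q,p) U(p)` of the program LP-TwoStep. -/
def LPobj (U : ℝ → ℝ) (χ : ℝ × ℝ →₀ ℝ) : ℝ := ∑ x ∈ χ.support, χ x * U x.2

/-- Feasibility for the program LP-TwoStep. -/
def LPFeasible (S : Setup n) (ε t : ℝ) (χ : ℝ × ℝ →₀ ℝ) (g : ℝ →₀ ℝ) : Prop :=
  (∀ x, 0 ≤ χ x) ∧
  (∀ x ∈ χ.support, x.1 ∈ Set.Icc (0 : ℝ) 1 ∧ x.2 ∈ Set.Icc (0 : ℝ) 1) ∧
  planCost t χ ≤ ε ^ t ∧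
  (∀ q, planMargQ χ q = g q) ∧ IsDist g ∧ MPCprior S g

/-- The optimal value of LP-TwoStep. -/
def OPTLP (S : Setup n) (ε t : ℝ) (U : ℝ → ℝ) : ℝ :=
  sSup {v | ∃ (χ : ℝ × ℝ →₀ ℝ) (g : ℝ →₀ ℝ), LPFeasible S ε t χ g ∧ v = LPobj U χ}

/-- Symmetric linear-tailed convex function with linear tails `[0, xL]`, `[xH, 1]` and
tail slopes `s1`, `s2` of equal absolute value. -/
def SymLinTailedConvex (Γ : ℝ → ℝ) (xL xH s1 s2 : ℝ) : Prop :=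
  ConvexOn ℝ (Set.Icc (0 : ℝ) 1) Γ ∧ 0 ≤ xL ∧ xL ≤ xH ∧ xH ≤ 1 ∧ |s1| = |s2| ∧
    (∃ c1, ∀ x ∈ Set.Icc (0 : ℝ) xL, Γ x = c1 + s1 * x) ∧
    (∃ c2, ∀ x ∈ Set.Icc xH (1 : ℝ), Γ x = c2 + s2 * x)

/-- Tuples `(i, j, q, p)` indexing a bi-event post-processing plan. -/
abbrev BiTuple (n : ℕ) := Fin n × Fin n × ℝ × ℝ

/-- The contribution ratio `r_{i,j}(q)`. -/
def ratio (S : Setup n) (i j : Fin n) (q : ℝ) : ℝ :=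
  if S.theta i < S.theta j then (S.theta j - q) / (S.theta j - S.theta i) else 1

/-- The contribution of the tuple `x = (i', j', q, p)` to event `i`:
`r_{i,j'}(q)` if `i' = i`, and `1 - r_{i',i}(q)` if `j' = i ≠ i'`. -/
def contrib (S : Setup n) (x : BiTuple n) (i : Fin n) : ℝ :=
  (if x.1 = i then ratio S x.1 x.2.1 x.2.2.1 else 0) +
    (if x.2.1 = i ∧ x.1 ≠ i then 1 - ratio S x.1 x.2.1 x.2.2.1 else 0)

/-- A bi-event post-processing plan. -/
def IsBiPlan (S : Setup n) (χ : BiTuple n →₀ ℝ) : Prop :=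
  (∀ x, 0 ≤ χ x) ∧
    ∀ x ∈ χ.support, x.1 ≤ x.2.1 ∧ x.2.2.1 ∈ Set.Icc (0 : ℝ) 1 ∧
      x.2.2.2 ∈ Set.Icc (0 : ℝ) 1 ∧ S.theta x.1 ≤ x.2.2.1 ∧ x.2.2.1 ≤ S.theta x.2.1

/-- Feasibility of a bi-event post-processing plan for `ℓ_t` ECE budget `ε`. -/
def FeasibleBiPlan (S : Setup n) (t ε : ℝ) (χ : BiTuple n →₀ ℝ) : Prop :=
  IsBiPlan S χ ∧
    (∑ x ∈ χ.support, χ x * |x.2.2.1 - x.2.2.2| ^ t) ≤ ε ^ t ∧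
    ∀ i, (∑ x ∈ χ.support, χ x * contrib S x i) = S.lam i

/-- The value `f_i(p)` of the predictor generated by a bi-event post-processing plan. -/
def genValBi (S : Setup n) (χ : BiTuple n →₀ ℝ) (i : Fin n) (p : ℝ) : ℝ :=
  1 / S.lam i * ∑ x ∈ χ.support.filter fun x => x.2.2.2 = p, χ x * contrib S x i

/-- The objective of LP-TwoStep+: `∑ χ_{i,j}(q,p) U_{i,j}(q,p)`. -/
def biObj (S : Setup n) (U : Fin n → ℝ → ℝ) (χ : BiTuple n →₀ ℝ) : ℝ :=
  ∑ x ∈ χ.support, χ x * (ratio S x.1 x.2.1 x.2.2.1 * U x.1 x.2.2.2 +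
    (1 - ratio S x.1 x.2.1 x.2.2.1) * U x.2.1 x.2.2.2)

/-- The optimal value of LP-TwoStep+. -/
def OPTBi (S : Setup n) (U : Fin n → ℝ → ℝ) (t ε : ℝ) : ℝ :=
  sSup {v | ∃ χ : BiTuple n →₀ ℝ, FeasibleBiPlan S t ε χ ∧ v = biObj S U χ}

/-- `U` is piecewise constant with all its discontinuity points in `Z`. -/
def PiecewiseConstWrt (Z : Finset ℝ) (U : ℝ → ℝ) : Prop :=
  ∀ x ∈ Set.Icc (0 : ℝ) 1, ∀ y ∈ Set.Icc (0 : ℝ) 1,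
    (∀ z ∈ Z, z ∉ Set.uIcc x y) → U x = U y

/-- The bound `S = ⌈2 ln(1/δ) / ln(1+δ)⌉` of the second discretization layer. -/
def Sbound (δ : ℝ) : ℕ := ⌈2 * Real.log (1 / δ) / Real.log (1 + δ)⌉₊

/-- The instance-dependent two-layer discretized set `S_δ`. -/
def gridSet (S : Setup n) (Z : Finset ℝ) (ε t δ : ℝ) : Set ℝ :=
  ({x : ℝ | ∃ k : ℕ, x = (k : ℝ) * δ} ∪ {(1 : ℝ)} ∪ Set.range S.theta ∪ (↑Z : Set ℝ) ∪
      {x : ℝ | ∃ z ∈ (↑Z : Set ℝ) ∪ Set.range S.theta, ∃ s : ℕ, s ≤ Sbound δ ∧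
        (x = z + (ε ^ t * δ * (1 + δ) ^ s) ^ (1 / t) ∨
          x = z - (ε ^ t * δ * (1 + δ) ^ s) ^ (1 / t))}) ∩
    Set.Icc (0 : ℝ) 1

/-- Feasibility for the discretized program LP-DiscTwoStep+. -/
def DiscFeasibleBiPlan (S : Setup n) (Z : Finset ℝ) (t ε δ : ℝ) (χ : BiTuple n →₀ ℝ) : Prop :=
  FeasibleBiPlan S t ε χ ∧
    ∀ x ∈ χ.support, x.2.2.1 ∈ gridSet S Z ε t δ ∧ x.2.2.2 ∈ gridSet S Z ε t δ

/-- The optimal value of LP-DiscTwoStep+. -/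
def OPTBiDisc (S : Setup n) (U : Fin n → ℝ → ℝ) (Z : Finset ℝ) (t ε δ : ℝ) : ℝ :=
  sSup {v | ∃ χ : BiTuple n →₀ ℝ, DiscFeasibleBiPlan S Z t ε δ χ ∧ v = biObj S U χ}

/-- A Bayesian persuasion instance with signal-dependent bias: states `θ_i` with
prior `λ`, actions `A`, sender utility `u a i = u(a, θ_i) ≥ 0`, and receiver utility
determined by `v1 a = v(a,1)` and `v0 a = v(a,0)`. -/
structure PSetup (n : ℕ) (A : Type*) : Type _ where
  lam : Fin n → ℝ
  theta : Fin n → ℝ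
  u : A → Fin n → ℝ
  v1 : A → ℝ
  v0 : A → ℝ
  lam_pos : ∀ i, 0 < lam i
  lam_sum : ∑ i, lam i = 1
  theta_mem : ∀ i, theta i ∈ Set.Icc (0 : ℝ) 1
  u_nonneg : ∀ a i, 0 ≤ u a i

variable {A σT : Type*}

/-- The receiver's utility from action `a` at belief mean `x`. -/
def rcvU (P : PSetup n A) (a : A) (x : ℝ) : ℝ := x * P.v1 a + (1 - x) * P.v0 a

/-- The total probability `m(σ)` of a signal `σ`. -/
def mass [Fintype σT] (P : PSetup n A) (π : Fin n → σT → ℝ) (σ : σT) : ℝ :=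
  ∑ i, P.lam i * π i σ

/-- The biased posterior mean `p(σ)` of the receiver upon signal `σ`. -/
def belief [Fintype σT] (P : PSetup n A) (π : Fin n → σT → ℝ) (b : σT → ℝ) (σ : σT) : ℝ :=
  (b σ + ∑ i, P.lam i * π i σ * P.theta i) / mass P π σ

/-- Validity of a sender strategy `(π, b)`. -/
def ValidStrategy [Fintype σT] (P : PSetup n A) (π : Fin n → σT → ℝ) (b : σT → ℝ) : Prop :=
  (∀ i σ, 0 ≤ π i σ) ∧ (∀ i, ∑ σ, π i σ = 1) ∧
    ∀ σ, 0 < mass P π σ → belief P π b σ ∈ Set.Icc (0 : ℝ) 1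

/-- `astar` is a receiver best-response selection for the strategy `(π, b)`. -/
def BestResponse [Fintype σT] (P : PSetup n A) (π : Fin n → σT → ℝ) (b : σT → ℝ)
    (astar : σT → A) : Prop :=
  ∀ σ, 0 < mass P π σ → ∀ a, rcvU P a (belief P π b σ) ≤ rcvU P (astar σ) (belief P π b σ)

/-- The bounded-rationality constraint on the total bias. -/
def BRconstraint [Fintype σT] (P : PSetup n A) (t ε : ℝ) (π : Fin n → σT → ℝ)
    (b : σT → ℝ) : Prop :=
  (∑ σ, mass P π σ * |b σ / mass P π σ| ^ t) ^ (1 / t) ≤ ε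

/-- The sender's expected payoff from strategy `π` with receiver selection `astar`. -/
def senderPayoff [Fintype σT] (P : PSetup n A) (π : Fin n → σT → ℝ) (astar : σT → A) : ℝ :=
  ∑ i, P.lam i * ∑ σ, π i σ * P.u (astar σ) i

/-- Feasibility for the action-recommendation program P-ActRec. -/
def PActRecFeasible [Fintype A] (P : PSetup n A) (t ε : ℝ)
    (π : Fin n → A → ℝ) (b : A → ℝ) : Prop :=
  (∀ i a, 0 ≤ π i a) ∧ (∀ i, ∑ a, π i a = 1) ∧
  (∀ a, mass P π a = 0 → b a = 0) ∧
  (∑ a, mass P π a * |b a / mass P π a| ^ t) ≤ ε ^ t ∧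
  (∀ a, 0 ≤ b a + ∑ i, P.lam i * π i a * P.theta i) ∧
  (∀ a, b a + ∑ i, P.lam i * π i a * P.theta i ≤ mass P π a) ∧
  ∀ a a' : A,
    (b a + ∑ i, P.lam i * π i a * P.theta i) * P.v1 a' +
        (mass P π a - (b a + ∑ i, P.lam i * π i a * P.theta i)) * P.v0 a' ≤
      (b a + ∑ i, P.lam i * π i a * P.theta i) * P.v1 a +
        (mass P π a - (b a + ∑ i, P.lam i * π i a * P.theta i)) * P.v0 a

/-- The sender-side marginal probability of recommendation `a` (calibration model). -/
def pmass [Fintype A] (S : Setup n) (π : Fin n → A → ℝ) (a : A) : ℝ := ∑ i, S.lam i * π i a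

/-- The biased posterior mean associated with recommendation `a` (calibration model). -/
def pbelief [Fintype A] (S : Setup n) (π : Fin n → A → ℝ) (b : A → ℝ) (a : A) : ℝ :=
  (b a + ∑ i, S.lam i * π i a * S.theta i) / pmass S π a

/-!
Merge all predictions of `f` with the same true expected outcome and announce that common
outcome: this is `g̃`, the relabelling of `f` by `κ`, and it is perfectly calibrated because an
average of predictions with outcome `q` has outcome `q`. The plan `χ` is the joint law of
`(κ p, p)` under the marginal of `f`, so its cost is the `t`-th power of the calibration error of
`f` and its first marginal is that of `g̃`. The generated predictor differs from `f` in general,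
since it forgets the event once `q` is drawn, but its marginal is the second marginal of `χ`,
which is that of `f`; an event-independent payoff depends on the marginal alone.
-/

section FinitelySupported

variable {α : Type*}

lemma mapDomain_apply_eq_sum_filter {β M : Type*} [DecidableEq β] [AddCommMonoid M] (k : α → β)
    (μ : α →₀ M) (q : β) : μ.mapDomain k q = ∑ p ∈ μ.support with k p = q, μ p := by
  simp only [Finsupp.mapDomain, Finsupp.sum, Finsupp.finsetSum_apply, Finsupp.single_apply,
    sum_filter]

lemma degree_eq_linearCombination_one {R : Type*} [Semiring R] (μ : α →₀ R) :
    μ.degree = Finsupp.linearCombination R (fun _ => (1 : R)) μ := by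
  simp only [Finsupp.degree_apply, Finsupp.linearCombination_apply, Finsupp.sum, smul_eq_mul,
    mul_one]

lemma degree_sum_smul {ι R : Type*} [Semiring R] (s : Finset ι) (w : ι → R) (μ : ι → α →₀ R) :
    (∑ i ∈ s, w i • μ i).degree = ∑ i ∈ s, w i * (μ i).degree := by
  simp only [degree_eq_linearCombination_one, map_sum, map_smul, smul_eq_mul]

end FinitelySupported

section Marginal

variable {S : Setup n} {f : Fin n → ℝ →₀ ℝ} {p : ℝ}

lemma mem_suppF : p ∈ suppF f ↔ ∃ i, f i p ≠ 0 := by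
  simp only [suppF, mem_biUnion, mem_univ, true_and, Finsupp.mem_support_iff]

lemma support_subset_suppF (f : Fin n → ℝ →₀ ℝ) (i : Fin n) : (f i).support ⊆ suppF f :=
  subset_biUnion_of_mem (fun j => (f j).support) (mem_univ i)

lemma IsPredictor.mem_Icc_of_mem_suppF (hf : IsPredictor f) (hp : p ∈ suppF f) :
    p ∈ Set.Icc (0 : ℝ) 1 := by
  obtain ⟨i, hi⟩ := mem_suppF.1 hp
  exact (hf i).2.1 p (Finsupp.mem_support_iff.2 hi)

lemma marginal_pos (hf : ∀ i p, 0 ≤ f i p) (hp : p ∈ suppF f) : 0 < marginal S f p := by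
  obtain ⟨i, hi⟩ := mem_suppF.1 hp
  exact sum_pos' (fun j _ => mul_nonneg (S.lam_pos j).le (hf j p))
    ⟨i, mem_univ i, mul_pos (S.lam_pos i) ((hf i p).lt_of_ne' hi)⟩

lemma marginal_eq_zero_of_notMem_suppF (hp : p ∉ suppF f) : marginal S f p = 0 := by
  have hzero : ∀ i, f i p = 0 := by simpa only [mem_suppF, not_exists, not_not] using hp
  simp only [marginal, hzero, mul_zero, sum_const_zero]

lemma kappa_mul_marginal (hf : ∀ i p, 0 ≤ f i p) (hp : p ∈ suppF f) :
    kappa S f p * marginal S f p = ∑ i, S.lam i * f i p * S.theta i :=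
  div_mul_cancel₀ _ (marginal_pos hf hp).ne'

lemma kappa_mem_Icc (hf : ∀ i p, 0 ≤ f i p) (hp : p ∈ suppF f) :
    kappa S f p ∈ Set.Icc (0 : ℝ) 1 := by
  have weight_nonneg : ∀ i, 0 ≤ S.lam i * f i p := fun i => mul_nonneg (S.lam_pos i).le (hf i p)
  have hm : 0 < marginal S f p := marginal_pos hf hp
  refine ⟨div_nonneg ?_ hm.le, (div_le_one hm).2 ?_⟩
  · exact sum_nonneg fun i _ => mul_nonneg (weight_nonneg i) (S.theta_mem i).1
  · exact sum_le_sum fun i _ => mul_le_of_le_one_right (weight_nonneg i) (S.theta_mem i).2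

/-- The marginal `f(p)` bundled as a finitely supported function, so that payoffs, costs and
calibration errors become values of `Finsupp.linearCombination` at it. -/
def marginalDist (S : Setup n) (f : Fin n → ℝ →₀ ℝ) : ℝ →₀ ℝ := ∑ i, S.lam i • f i

lemma marginalDist_apply (S : Setup n) (f : Fin n → ℝ →₀ ℝ) (p : ℝ) :
    marginalDist S f p = marginal S f p := by
  simp only [marginalDist, marginal, Finsupp.finsetSum_apply, Finsupp.smul_apply, smul_eq_mul]

lemma support_marginalDist_subset (S : Setup n) (f : Fin n → ℝ →₀ ℝ) :
    (marginalDist S f).support ⊆ suppF f := fun p hp => by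
  by_contra hp'
  rw [Finsupp.mem_support_iff, marginalDist_apply] at hp
  exact hp (marginal_eq_zero_of_notMem_suppF hp')

lemma linearCombination_marginalDist (S : Setup n) (f : Fin n → ℝ →₀ ℝ) (u : ℝ → ℝ) :
    Finsupp.linearCombination ℝ u (marginalDist S f) = ∑ p ∈ suppF f, marginal S f p * u p := by
  have supported : marginalDist S f ∈ Finsupp.supported ℝ ℝ (suppF f : Set ℝ) :=
    coe_subset.2 (support_marginalDist_subset S f)
  simp only [Finsupp.linearCombination_apply_of_mem_supported ℝ supported, marginalDist_apply,
    smul_eq_mul]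

lemma payoffEI_eq_linearCombination (S : Setup n) (U : ℝ → ℝ) (f : Fin n → ℝ →₀ ℝ) :
    payoffEI S U f = Finsupp.linearCombination ℝ U (marginalDist S f) := by
  simp only [marginalDist, map_sum, map_smul, Finsupp.linearCombination_apply, Finsupp.sum,
    smul_eq_mul, payoffEI, payoff]

lemma IsPredictor.isDist_marginalDist (hf : IsPredictor f) : IsDist (marginalDist S f) := by
  refine ⟨fun p => ?_, fun p hp => ?_, ?_⟩
  · rw [marginalDist_apply]
    exact sum_nonneg fun i _ => mul_nonneg (S.lam_pos i).le ((hf i).1 p)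
  · exact hf.mem_Icc_of_mem_suppF (support_marginalDist_subset S f hp)
  · calc (marginalDist S f).degree = ∑ i, S.lam i * (f i).degree := degree_sum_smul _ _ _
      _ = ∑ i, S.lam i := sum_congr rfl fun i _ => by
        rw [show (f i).degree = 1 from (hf i).2.2, mul_one]
      _ = 1 := S.lam_sum

end Marginal

section Relabel

variable {S : Setup n} {k : ℝ → ℝ} {f : Fin n → ℝ →₀ ℝ}

/-- The predictor announcing `k p` whenever `f` announces `p`.
For `k = κ` it is the paper's `g̃`. -/
def relabel (k : ℝ → ℝ) (f : Fin n → ℝ →₀ ℝ) : Fin n → ℝ →₀ ℝ := fun i => (f i).mapDomain k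

/-- The joint distribution of the pair `(k p, p)` when `p` is drawn from the marginal of `f`.
For `k = κ` it is the paper's post-processing plan `χ`. -/
def relabelPlan (S : Setup n) (k : ℝ → ℝ) (f : Fin n → ℝ →₀ ℝ) : ℝ × ℝ →₀ ℝ :=
  (marginalDist S f).mapDomain fun p => (k p, p)

lemma relabel_apply (k : ℝ → ℝ) (f : Fin n → ℝ →₀ ℝ) (i : Fin n) (q : ℝ) :
    relabel k f i q = ∑ p ∈ (f i).support with k p = q, f i p :=
  mapDomain_apply_eq_sum_filter k (f i) q

lemma relabel_apply_eq_sum_suppF (k : ℝ → ℝ) (f : Fin n → ℝ →₀ ℝ) (i : Fin n) (q : ℝ) :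
    relabel k f i q = ∑ p ∈ suppF f with k p = q, f i p := by
  rw [relabel_apply, sum_filter, sum_filter]
  refine sum_subset (support_subset_suppF f i) fun p _ hp => ?_
  rw [Finsupp.notMem_support_iff.1 hp, ite_self]

lemma relabelPlan_apply (S : Setup n) (k : ℝ → ℝ) (f : Fin n → ℝ →₀ ℝ) (q p : ℝ) :
    relabelPlan S k f (q, p) = if k p = q then marginal S f p else 0 := by
  have pair_injective : Function.Injective fun p => (k p, p) := fun _ _ h => congrArg Prod.snd h
  split_ifs with hkp
  · rw [← hkp, ← marginalDist_apply]
    exact Finsupp.mapDomain_apply pair_injective _ p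
  · refine Finsupp.mapDomain_of_notMem_range _ _ ?_
    rintro ⟨p', hp'⟩
    obtain ⟨rfl, rfl⟩ := Prod.mk.inj hp'
    exact hkp rfl

lemma marginalDist_relabel (S : Setup n) (k : ℝ → ℝ) (f : Fin n → ℝ →₀ ℝ) :
    marginalDist S (relabel k f) = (marginalDist S f).mapDomain k := by
  simp only [marginalDist, relabel, Finsupp.mapDomain_finsetSum, Finsupp.mapDomain_smul]

lemma marginal_relabel (S : Setup n) (k : ℝ → ℝ) (f : Fin n → ℝ →₀ ℝ) (q : ℝ) :
    marginal S (relabel k f) q = ∑ p ∈ suppF f with k p = q, marginal S f p := by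
  simp only [marginal, relabel_apply_eq_sum_suppF, mul_sum]
  exact sum_comm

lemma IsPredictor.relabel (hf : IsPredictor f) (hk : ∀ p ∈ suppF f, k p ∈ Set.Icc (0 : ℝ) 1) :
    IsPredictor (relabel k f) := by
  intro i
  refine ⟨Finsupp.mapDomain_nonneg (hf i).1, fun q hq => ?_, ?_⟩
  · obtain ⟨p, hp, rfl⟩ := mem_image.1 (Finsupp.mapDomain_support hq)
    exact hk p (support_subset_suppF f i hp)
  · exact (Finsupp.degree_mapDomain k (f i)).trans (hf i).2.2

lemma IsPredictor.isPlan_relabelPlan (hf : IsPredictor f)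
    (hk : ∀ p ∈ suppF f, k p ∈ Set.Icc (0 : ℝ) 1) : IsPlan (relabelPlan S k f) := by
  have hm : IsDist (marginalDist S f) := hf.isDist_marginalDist
  refine ⟨Finsupp.mapDomain_nonneg hm.1, fun x hx => ?_, ?_⟩
  · obtain ⟨p, hp, rfl⟩ := mem_image.1 (Finsupp.mapDomain_support hx)
    exact ⟨hk p (support_marginalDist_subset S f hp), hm.2.1 p hp⟩
  · exact (Finsupp.degree_mapDomain _ (marginalDist S f)).trans hm.2.2

lemma planMargQ_relabelPlan (S : Setup n) (k : ℝ → ℝ) (f : Fin n → ℝ →₀ ℝ) (q : ℝ) :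
    planMargQ (relabelPlan S k f) q = marginal S (relabel k f) q :=
  calc planMargQ (relabelPlan S k f) q
    _ = (relabelPlan S k f).mapDomain Prod.fst q :=
      (mapDomain_apply_eq_sum_filter Prod.fst (relabelPlan S k f) q).symm
    _ = (marginalDist S f).mapDomain k q := by
      rw [relabelPlan, ← Finsupp.mapDomain_comp]
      rfl
    _ = marginal S (relabel k f) q := by
      rw [← marginalDist_relabel, marginalDist_apply]

lemma LPobj_relabelPlan (S : Setup n) (U k : ℝ → ℝ) (f : Fin n → ℝ →₀ ℝ) :
    LPobj U (relabelPlan S k f) = payoffEI S U f :=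
  (Finsupp.linearCombination_mapDomain ℝ (v' := fun x : ℝ × ℝ => U x.2) _ _).trans
    (payoffEI_eq_linearCombination S U f).symm

lemma planCost_relabelPlan (S : Setup n) (t : ℝ) (k : ℝ → ℝ) (f : Fin n → ℝ →₀ ℝ) :
    planCost t (relabelPlan S k f) = ∑ p ∈ suppF f, marginal S f p * |k p - p| ^ t :=
  (Finsupp.linearCombination_mapDomain ℝ (v' := fun x : ℝ × ℝ => |x.1 - x.2| ^ t) _ _).trans
    (linearCombination_marginalDist S f fun p => |k p - p| ^ t)

lemma sum_marginal_mul_abs_rpow_nonneg (t : ℝ) (hf : ∀ i p, 0 ≤ f i p) :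
    0 ≤ ∑ p ∈ suppF f, marginal S f p * |k p - p| ^ t :=
  sum_nonneg fun _ hp => mul_nonneg (marginal_pos hf hp).le (Real.rpow_nonneg (abs_nonneg _) t)

lemma planCost_relabelPlan_kappa {t : ℝ} (ht : 0 < t) (hf : ∀ i p, 0 ≤ f i p) :
    planCost t (relabelPlan S (kappa S f) f) = ECE S t f ^ t := by
  rw [planCost_relabelPlan, ECE, ← Real.rpow_mul (sum_marginal_mul_abs_rpow_nonneg t hf),
    one_div_mul_cancel ht.ne', Real.rpow_one]

lemma feasiblePlan_relabelPlan_kappa {t ε : ℝ} (ht : 0 < t) (hf : ∀ i p, 0 ≤ f i p)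
    (hcal : ECE S t f ≤ ε) :
    FeasiblePlan S t ε (relabel (kappa S f) f) (relabelPlan S (kappa S f) f) := by
  have ece_nonneg : 0 ≤ ECE S t f := Real.rpow_nonneg (sum_marginal_mul_abs_rpow_nonneg t hf) _
  refine ⟨?_, planMargQ_relabelPlan S _ f⟩
  rw [planCost_relabelPlan_kappa ht hf]
  exact Real.rpow_le_rpow ece_nonneg hcal ht.le

lemma perfectlyCalibrated_relabel_kappa (hf : ∀ i p, 0 ≤ f i p) :
    PerfectlyCalibrated S (relabel (kappa S f) f) := by
  intro q hq
  have relabel_nonneg : ∀ i q, 0 ≤ relabel (kappa S f) f i q := fun i =>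
    Finsupp.mapDomain_nonneg (hf i)
  rw [kappa, div_eq_iff (marginal_pos relabel_nonneg hq).ne']
  calc ∑ i, S.lam i * relabel (kappa S f) f i q * S.theta i
    _ = ∑ p ∈ suppF f with kappa S f p = q, ∑ i, S.lam i * f i p * S.theta i := by
      simp only [relabel_apply_eq_sum_suppF, mul_sum, sum_mul]
      exact sum_comm
    _ = ∑ p ∈ suppF f with kappa S f p = q, q * marginal S f p := by
      refine sum_congr rfl fun p hp => ?_
      obtain ⟨hp_supp, rfl⟩ := mem_filter.1 hp
      exact (kappa_mul_marginal hf hp_supp).symm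
    _ = q * marginal S (relabel (kappa S f) f) q := by
      rw [marginal_relabel, mul_sum]

end Relabel

section Generated

variable {S : Setup n} {g : Fin n → ℝ →₀ ℝ} {χ : ℝ × ℝ →₀ ℝ}

/-- The predictor generated by `(g, χ)`: on event `i`, draw `q` from `g i` and then `p` from the
conditional law `χ(q, ·) / g(q)`. -/
def generatedPredictor (S : Setup n) (g : Fin n → ℝ →₀ ℝ) (χ : ℝ × ℝ →₀ ℝ) :
    Fin n → ℝ →₀ ℝ :=
  fun i => ∑ q ∈ suppF g, (g i q / marginal S g q) • χ.curry q

lemma generatedPredictor_apply (S : Setup n) (g : Fin n → ℝ →₀ ℝ) (χ : ℝ × ℝ →₀ ℝ) (i : Fin n)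
    (p : ℝ) : generatedPredictor S g χ i p = genVal S g χ i p := by
  simp only [generatedPredictor, genVal, Finsupp.finsetSum_apply, Finsupp.smul_apply,
    Finsupp.curry_apply, smul_eq_mul]

lemma degree_curry (χ : ℝ × ℝ →₀ ℝ) (q : ℝ) : (χ.curry q).degree = planMargQ χ q := by
  apply sum_nbij' (Prod.mk q) Prod.snd <;> aesop

lemma curry_support_subset_suppF (hχ : ∀ x, 0 ≤ χ x)
    (hmarg : ∀ q, planMargQ χ q = marginal S g q) :
    χ.curry.support ⊆ suppF g := by
  intro q hq
  by_contra hq'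
  have slice_mass : (χ.curry q).degree = 0 := by
    rw [degree_curry, hmarg, marginal_eq_zero_of_notMem_suppF hq']
  refine Finsupp.mem_support_iff.1 hq (Finsupp.ext fun p => ?_)
  by_contra hp
  exact hp ((sum_eq_zero_iff_of_nonneg fun p _ => hχ (q, p)).1 slice_mass p
    (Finsupp.mem_support_iff.2 hp))

lemma IsPlan.isPredictor_generatedPredictor (hχ : IsPlan χ) (hg : IsPredictor g)
    (hmarg : ∀ q, planMargQ χ q = marginal S g q) : IsPredictor (generatedPredictor S g χ) := by
  have hg₀ : ∀ i q, 0 ≤ g i q := fun i => (hg i).1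
  intro i
  refine ⟨fun p => ?_, fun p hp => ?_, ?_⟩
  · rw [generatedPredictor_apply]
    exact sum_nonneg fun q hq =>
      mul_nonneg (div_nonneg (hg₀ i q) (marginal_pos hg₀ hq).le) (hχ.1 (q, p))
  · rw [Finsupp.mem_support_iff, generatedPredictor_apply] at hp
    obtain ⟨q, -, hqp⟩ := exists_ne_zero_of_sum_ne_zero hp
    exact (hχ.2.1 (q, p) (Finsupp.mem_support_iff.2 (right_ne_zero_of_mul hqp))).2
  · calc (generatedPredictor S g χ i).degree
      _ = ∑ q ∈ suppF g, g i q / marginal S g q * marginal S g q := by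
        simp only [generatedPredictor, degree_sum_smul, degree_curry, hmarg]
      _ = ∑ q ∈ suppF g, g i q :=
        sum_congr rfl fun q hq => div_mul_cancel₀ _ (marginal_pos hg₀ hq).ne'
      _ = ∑ q ∈ (g i).support, g i q :=
        (sum_subset (support_subset_suppF g i) fun q _ hq => Finsupp.notMem_support_iff.1 hq).symm
      _ = 1 := (hg i).2.2

lemma marginalDist_generatedPredictor (hg : ∀ i q, 0 ≤ g i q) :
    marginalDist S (generatedPredictor S g χ) = ∑ q ∈ suppF g, χ.curry q := by
  simp only [marginalDist, generatedPredictor, smul_sum, smul_smul]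
  rw [sum_comm]
  refine sum_congr rfl fun q hq => ?_
  rw [← sum_smul]
  have conditional_mass : ∑ i, S.lam i * (g i q / marginal S g q) = 1 := by
    simp only [← mul_div_assoc, ← sum_div]
    exact div_self (marginal_pos hg hq).ne'
  rw [conditional_mass, one_smul]

lemma payoffEI_generatedPredictor (U : ℝ → ℝ) (hχ : ∀ x, 0 ≤ χ x) (hg : ∀ i q, 0 ≤ g i q)
    (hmarg : ∀ q, planMargQ χ q = marginal S g q) :
    payoffEI S U (generatedPredictor S g χ) = LPobj U χ :=
  calc payoffEI S U (generatedPredictor S g χ)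
    _ = ∑ q ∈ suppF g, Finsupp.linearCombination ℝ U (χ.curry q) := by
      rw [payoffEI_eq_linearCombination, marginalDist_generatedPredictor hg, map_sum]
    _ = χ.curry.sum fun _ slice => Finsupp.linearCombination ℝ U slice :=
      (Finsupp.sum_of_support_subset _ (curry_support_subset_suppF hχ hmarg) _
        fun _ _ => map_zero _).symm
    _ = LPobj U χ := Finsupp.sum_curry_index χ fun _ p a => a * U p

end Generated

theorem statement1_general {n : ℕ} (S : Setup n) (t ε : ℝ) (ht : 0 < t)
    (f : Fin n → ℝ →₀ ℝ) (hf : IsPredictor f) (hcal : ECE S t f ≤ ε)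
    (g : Fin n → ℝ →₀ ℝ)
    (hgdef : ∀ i q, g i q = ∑ p ∈ (f i).support.filter fun p => kappa S f p = q, f i p)
    (χ : ℝ × ℝ →₀ ℝ)
    (hχdef : ∀ q p, χ (q, p) = ∑ i, S.lam i * f i p * (if kappa S f p = q then 1 else 0)) :
    IsPredictor g ∧ PerfectlyCalibrated S g ∧ IsPlan χ ∧ FeasiblePlan S t ε g χ ∧
      ∃ fd : Fin n → ℝ →₀ ℝ, (∀ i p, fd i p = genVal S g χ i p) ∧ IsPredictor fd ∧
        ∀ U : ℝ → ℝ, payoffEI S U fd = payoffEI S U f := by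
  obtain rfl : g = relabel (kappa S f) f := by
    ext i q
    rw [hgdef, relabel_apply]
  obtain rfl : χ = relabelPlan S (kappa S f) f := by
    ext ⟨q, p⟩
    rw [hχdef, relabelPlan_apply, ← sum_mul, mul_ite, mul_one, mul_zero]
    rfl
  have hf₀ : ∀ i p, 0 ≤ f i p := fun i => (hf i).1
  have hκ : ∀ p ∈ suppF f, kappa S f p ∈ Set.Icc (0 : ℝ) 1 := fun _ => kappa_mem_Icc hf₀
  have hg : IsPredictor (relabel (kappa S f) f) := hf.relabel hκ
  have hχ : IsPlan (relabelPlan S (kappa S f) f) := hf.isPlan_relabelPlan hκ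
  have hmarg := planMargQ_relabelPlan S (kappa S f) f
  exact ⟨hg, perfectlyCalibrated_relabel_kappa hf₀, hχ, feasiblePlan_relabelPlan_kappa ht hf₀ hcal,
    generatedPredictor S _ _, generatedPredictor_apply S _ _,
    hχ.isPredictor_generatedPredictor hg hmarg, fun U =>
      (payoffEI_generatedPredictor U hχ.1 (fun i => (hg i).1) hmarg).trans
        (LPobj_relabelPlan S U _ f)⟩

/-- In the event-independent setting, any `(ε, ℓ_t)`-calibrated
predictor `f` yields, via the canonical construction, a perfectly calibrated
predictor `g̃`, a feasible post-processing plan `χ`, and a generated predictor `f†`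
with the same principal payoff. -/
theorem statement1 {n : ℕ} (S : Setup n) (t ε : ℝ) (ht : 1 ≤ t) (hε : 0 ≤ ε)
    (U : ℝ → ℝ) (hU0 : ∀ p ∈ Set.Icc (0 : ℝ) 1, 0 ≤ U p)
    (f : Fin n → ℝ →₀ ℝ) (hf : IsPredictor f) (hcal : ECE S t f ≤ ε)
    (g : Fin n → ℝ →₀ ℝ)
    (hgdef : ∀ i q, g i q = ∑ p ∈ (f i).support.filter fun p => kappa S f p = q, f i p)
    (χ : ℝ × ℝ →₀ ℝ)
    (hχdef : ∀ q p, χ (q, p) = ∑ i, S.lam i * f i p * (if kappa S f p = q then 1 else 0)) :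
    IsPredictor g ∧ PerfectlyCalibrated S g ∧ IsPlan χ ∧ FeasiblePlan S t ε g χ ∧
      ∃ fd : Fin n → ℝ →₀ ℝ, (∀ i p, fd i p = genVal S g χ i p) ∧ IsPredictor fd ∧
        payoffEI S U fd = payoffEI S U f := by
  obtain ⟨hg, hgcal, hχ, hfeas, fd, hgen, hfd, hpay⟩ :=
    statement1_general S t ε (one_pos.trans_le ht) f hf hcal g hgdef χ hχdef
  exact ⟨hg, hgcal, hχ, hfeas, fd, hgen, hfd, hpay U⟩

end PersuasiveCalibration
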